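/- Let C₂ = ZMod 2 act on ℝ² = EuclideanSpace ℝ (Fin 2) by swapping the two coordinates (the real regular representation ρ of C₂), act on ℝ² × ℝ via this action on ℝ² and trivially on ℝ, and act on the one-point compactifications OnePoint ℝ² and OnePoint (ℝ² × ℝ) by the induced actions fixing ∞ (based at ∞). Then the space Map^{C₂}_*(OnePoint ℝ², OnePoint (ℝ² × ℝ)) of C₂-equivariant basepoint-preserving continuous maps is homotopy equivalent to Map_*(S¹, S²) × Map_*(S², S³), i.e. to Ω S² × Ω² S³. (This is the computation (Ω^ρ S^{ρ+1})^{C₂} ≃ Ω(S² × Ω S³) from the identification of X_{ρ,2}^{ΦC₂}.) -/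

import Mathlib

/-!
STATEMENT 4: With `C₂ = ZMod 2` acting on `ℝ²` by swapping the two coordinates
(the real regular representation `ρ`), the space of equivariant based maps
`Map^{C₂}_*(OnePoint ℝ², OnePoint (ℝ² × ℝ))` is homotopy equivalent to
`Ω S² × Ω² S³`.
-/

noncomputable section

/-- The action of `k : ZMod 2` on `ℝ² = EuclideanSpace ℝ (Fin 2)`: the nontrivial
element swaps the two coordinates. -/
def swapAct (k : ZMod 2) (v : EuclideanSpace ℝ (Fin 2)) : EuclideanSpace ℝ (Fin 2) :=
  if k = 0 then v
  else (WithLp.equiv 2 (Fin 2 → ℝ)).symm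
    (fun i => (WithLp.equiv 2 (Fin 2 → ℝ)) v (Equiv.swap (0 : Fin 2) 1 i))

/-- `Map_*(S^k, S^l)`: based maps between one-point compactifications of
Euclidean spaces, based at `∞`. -/
abbrev BasedSphereMaps (k l : ℕ) : Type :=
  {f : C(OnePoint (EuclideanSpace ℝ (Fin k)), OnePoint (EuclideanSpace ℝ (Fin l))) //
    f OnePoint.infty = OnePoint.infty}

/-!
In the coordinates `v₀ + v₁`, `v₀ - v₁` the swap becomes the reflection of the last coordinate, on
`S^ρ = (ℝ × ℝ)⁺` and on `S^{ρ+1} = (ℝ² × ℝ)⁺`. An equivariant map is therefore an arbitrary map out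
of the closed half-space `(ℝ × [0, ∞))⁺` that sends the boundary `ℝ⁺ = S¹` into the fixed sphere
`S²`. Restriction to the boundary has a section `φ ↦ φ ∧ ([0, ∞)⁺ ↪ ℝ⁺)`, and `S³` is a topological
group with unit `∞`, so dividing by the section splits the mapping space as the product of `Ω S²`
with the space of maps that are trivial on the boundary; the latter is `Ω² S³`, since collapsing the
boundary of the half-space leaves `(ℝ × (0, ∞))⁺ = S²`.
-/

open Function Set Topology
open scoped OnePoint NNReal

section Precomposition

variable {A B Z W : Type*} [TopologicalSpace A] [TopologicalSpace B] [TopologicalSpace Z]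
  [TopologicalSpace W] {p : C(A, B)}

lemma isQuotientMap_of_isProperMap (hp : IsProperMap p) (hs : Surjective p) : IsQuotientMap p :=
  hp.isClosedMap.isQuotientMap hp.continuous hs

lemma isInducing_precomp_of_isProperMap (hp : IsProperMap p) (hs : Surjective p) :
    IsInducing fun g : C(B, Z) => g.comp p := by
  refine ⟨le_antisymm (ContinuousMap.continuous_precomp p).le_induced ?_⟩
  rw [ContinuousMap.compactOpen_eq]
  refine le_generateFrom ?_
  rintro _ ⟨K, hK, U, hU, rfl⟩
  refine isOpen_induced_iff.2 ⟨{g | MapsTo g (p ⁻¹' K) U},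
    ContinuousMap.isOpen_setOfPred_mapsTo (hp.isCompact_preimage hK) hU, ?_⟩
  ext g
  exact (hs.forall (p := fun b => b ∈ K → g b ∈ U)).symm

/-- The descent of a map along a proper surjection. -/
def properLift (hp : IsProperMap p) (hs : Surjective p) (g : C(A, Z)) (hg : FactorsThrough g p) :
    C(B, Z) :=
  (isQuotientMap_of_isProperMap hp hs).lift g hg

lemma properLift_comp (hp : IsProperMap p) (hs : Surjective p) (g : C(A, Z))
    (hg : FactorsThrough g p) : (properLift hp hs g hg).comp p = g :=
  (isQuotientMap_of_isProperMap hp hs).lift_comp g hg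

lemma properLift_apply (hp : IsProperMap p) (hs : Surjective p) (g : C(A, Z))
    (hg : FactorsThrough g p) (a : A) : properLift hp hs g hg (p a) = g a :=
  DFunLike.congr_fun (properLift_comp hp hs g hg) a

lemma continuous_properLift (hp : IsProperMap p) (hs : Surjective p) {g : W → C(A, Z)}
    (hg : Continuous g) (hgp : ∀ w, FactorsThrough (g w) p) :
    Continuous fun w => properLift hp hs (g w) (hgp w) := by
  simpa only [(isInducing_precomp_of_isProperMap hp hs).continuous_iff, comp_def,
    properLift_comp] using hg

end Precomposition

section Collapse

variable {U K Z : Type*} {j : U → K}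

/-- The Pontryagin–Thom collapse `K → U⁺` of a map `j : U → K`, meant for open embeddings: it
inverts `j` on its range and sends everything else to `∞`. -/
def collapse (j : U → K) : K → OnePoint U :=
  extend j (↑) fun _ => ∞

lemma collapse_apply (hj : Injective j) (u : U) : collapse j (j u) = u :=
  hj.extend_apply _ _ u

lemma collapse_of_notMem_range {x : K} (hx : x ∉ range j) : collapse j x = ∞ :=
  extend_apply' _ _ x hx

lemma collapse_preimage_coe_image (hj : Injective j) (s : Set U) :
    collapse j ⁻¹' ((↑) '' s) = j '' s := by
  ext x
  by_cases hx : x ∈ range j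
  · obtain ⟨u, rfl⟩ := hx
    simp [collapse_apply hj, hj.mem_set_image]
  · have : x ∉ j '' s := fun h => hx (image_subset_range j s h)
    simp [collapse_of_notMem_range hx, this]

lemma collapse_surjective (hj : Injective j) {x : K} (hx : x ∉ range j) :
    Surjective (collapse j) := by
  intro z
  induction z using OnePoint.rec with
  | infty => exact ⟨x, collapse_of_notMem_range hx⟩
  | coe u => exact ⟨j u, collapse_apply hj u⟩

lemma factorsThrough_collapse_iff (hj : Injective j) {g : K → Z} {k : K} (hk : k ∉ range j) :
    FactorsThrough g (collapse j) ↔ ∀ x ∉ range j, g x = g k := by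
  refine ⟨fun h x hx => h ?_, fun h x y hxy => ?_⟩
  · rw [collapse_of_notMem_range hx, collapse_of_notMem_range hk]
  by_cases hx : x ∈ range j <;> by_cases hy : y ∈ range j
  · obtain ⟨⟨u, rfl⟩, v, rfl⟩ := And.intro hx hy
    rw [collapse_apply hj, collapse_apply hj, OnePoint.coe_eq_coe] at hxy
    rw [hxy]
  · obtain ⟨u, rfl⟩ := hx
    simp [collapse_apply hj, collapse_of_notMem_range hy] at hxy
  · obtain ⟨v, rfl⟩ := hy
    simp [collapse_apply hj, collapse_of_notMem_range hx] at hxy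
  · rw [h x hx, h y hy]

variable [TopologicalSpace U] [TopologicalSpace K] [TopologicalSpace Z]

lemma continuous_collapse [T2Space K] (hj : IsOpenEmbedding j) : Continuous (collapse j) := by
  refine continuous_def.2 fun V hV => ?_
  by_cases hinf : ∞ ∈ V
  · obtain ⟨-, hcompact⟩ := (OnePoint.isOpen_iff_of_mem hinf).1 hV
    have hV' : V = ((↑) '' ((↑) ⁻¹' V : Set U)ᶜ)ᶜ := by
      rw [OnePoint.compl_image_coe, compl_compl, image_preimage_eq_inter_range,
        ← OnePoint.compl_infty, ← sdiff_eq, sdiff_union_of_subset (singleton_subset_iff.2 hinf)]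
    rw [hV', preimage_compl, collapse_preimage_coe_image hj.injective]
    exact (hcompact.image hj.continuous).isClosed.isOpen_compl
  · have hV' : V = (↑) '' ((↑) ⁻¹' V : Set U) := by
      rw [image_preimage_eq_inter_range, ← OnePoint.compl_infty, ← sdiff_eq,
        sdiff_singleton_eq_self hinf]
    rw [hV', collapse_preimage_coe_image hj.injective]
    exact hj.isOpenMap _ (hV.preimage OnePoint.continuous_coe)

/-- The collapse of an open embedding, as a bundled continuous map. -/
def collapseMap [T2Space K] (hj : IsOpenEmbedding j) : C(K, OnePoint U) :=
  ⟨collapse j, continuous_collapse hj⟩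

lemma isProperMap_collapseMap [CompactSpace K] [T2Space K] (hj : IsOpenEmbedding j) :
    IsProperMap (collapseMap hj) := by
  have : LocallyCompactSpace U := hj.locallyCompactSpace
  have : T2Space U := hj.isEmbedding.t2Space
  exact (collapseMap hj).continuous.isProperMap

/-- Based maps out of `U⁺` are the maps out of `K` that are constant off the open subspace `U`. -/
def basedMapsCollapseHomeomorph [CompactSpace K] [T2Space K] (hj : IsOpenEmbedding j) {k : K}
    (hk : k ∉ range j) (z : Z) :
    {f : C(OnePoint U, Z) // f ∞ = z} ≃ₜ {g : C(K, Z) // ∀ x ∉ range j, g x = z} :=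
  have hp : IsProperMap (collapseMap hj) := isProperMap_collapseMap hj
  have hs : Surjective (collapseMap hj) := collapse_surjective hj.injective hk
  have factorsThrough (g : {g : C(K, Z) // ∀ x ∉ range j, g x = z}) :
      FactorsThrough g.1 (collapseMap hj) :=
    (factorsThrough_collapse_iff hj.injective hk).2 fun x hx => (g.2 x hx).trans (g.2 k hk).symm
  { toFun f := ⟨f.1.comp (collapseMap hj), fun x hx =>
      (congrArg f.1 (collapse_of_notMem_range hx)).trans f.2⟩
    invFun g := ⟨properLift hp hs g.1 (factorsThrough g),
      calc
        _ = properLift hp hs g.1 (factorsThrough g) (collapseMap hj k) :=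
          congrArg _ (collapse_of_notMem_range hk).symm
        _ = z := (properLift_apply hp hs g.1 (factorsThrough g) k).trans (g.2 k hk)⟩
    left_inv f := Subtype.ext <| ContinuousMap.ext <| hs.forall.2 fun x =>
      properLift_apply hp hs (f.1.comp (collapseMap hj)) (fun _ _ h => congrArg f.1 h) x
    right_inv g := Subtype.ext (properLift_comp hp hs g.1 (factorsThrough g))
    continuous_toFun := by fun_prop
    continuous_invFun :=
      (continuous_properLift hp hs continuous_subtype_val factorsThrough).subtype_mk _ }

end Collapse

section FundamentalDomain

variable {H H' A B : Type*} [TopologicalSpace H] [TopologicalSpace H'] [TopologicalSpace A]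
  [TopologicalSpace B]

/-- The map out of a disjoint union with given restrictions to the two summands. -/
def sumElimMap (g : C(H, B)) (g' : C(H', B)) : C(H ⊕ H', B) :=
  ⟨Sum.elim g g', by fun_prop⟩

lemma continuous_sumElimMap : Continuous fun g : C(H, B) × C(H', B) => sumElimMap g.1 g.2 := by
  refine ContinuousMap.continuous_compactOpen.2 fun K hK U hU => ?_
  have mapsTo_iff (g : C(H, B) × C(H', B)) : MapsTo (sumElimMap g.1 g.2) K U ↔
      MapsTo g.1 (Sum.inl ⁻¹' K) U ∧ MapsTo g.2 (Sum.inr ⁻¹' K) U := Sum.forall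
  simp only [mapsTo_iff]
  have hinl : IsCompact (Sum.inl ⁻¹' K : Set H) := IsClosedEmbedding.inl.isCompact_preimage hK
  have hinr : IsCompact (Sum.inr ⁻¹' K : Set H') := IsClosedEmbedding.inr.isCompact_preimage hK
  exact ((ContinuousMap.isOpen_setOfPred_mapsTo hinl hU).preimage continuous_fst).inter
    ((ContinuousMap.isOpen_setOfPred_mapsTo hinr hU).preimage continuous_snd)

/-- Let involutions act on `A` and `B`, and let `i : H → A` be a fundamental domain, in the sense
that `A` is the union of `i(H)` and its translate and that these meet only in fixed points. The
equivariant maps `A → B` are the maps `H → B` that send the fixed points of `A` in `H` to fixed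
points. -/
def fundamentalDomainHomeomorph [CompactSpace H] [T2Space A] {ρ : C(A, A)} {τ : C(B, B)}
    (hρ : Involutive ρ) (hτ : Involutive τ) {i : C(H, A)} (hi : Injective i)
    (hcover : ∀ a, (∃ z, i z = a) ∨ ∃ z, ρ (i z) = a) (hmeet : ∀ z w, ρ (i z) = i w → z = w)
    (h : H) (b : B) :
    {f : C(A, B) // f (i h) = b ∧ ∀ a, f (ρ a) = τ (f a)} ≃ₜ
      {g : C(H, B) // g h = b ∧ ∀ z, ρ (i z) = i z → τ (g z) = g z} :=
  have hp : IsProperMap (sumElimMap i (ρ.comp i)) :=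
    (sumElimMap i (ρ.comp i)).continuous.isProperMap
  have hs : Surjective (sumElimMap i (ρ.comp i)) := fun a =>
    (hcover a).elim (fun ⟨z, hz⟩ => ⟨.inl z, hz⟩) (fun ⟨z, hz⟩ => ⟨.inr z, hz⟩)
  have factorsThrough (g : {g : C(H, B) // g h = b ∧ ∀ z, ρ (i z) = i z → τ (g z) = g z}) :
      FactorsThrough (sumElimMap g.1 (τ.comp g.1)) (sumElimMap i (ρ.comp i)) := by
    have glue {z w : H} (hzw : ρ (i z) = i w) : τ (g.1 z) = g.1 w := by
      obtain rfl := hmeet z w hzw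
      exact g.2.2 z hzw
    rintro (z | z) (w | w) hzw
    · exact congrArg g.1 (hi hzw)
    · exact (glue hzw.symm).symm
    · exact glue hzw
    · exact congrArg (τ ∘ g.1) (hi (hρ.injective hzw))
  { toFun f := ⟨f.1.comp i, f.2.1, fun z hz => by
      rw [ContinuousMap.comp_apply, ← f.2.2, hz]⟩
    invFun g :=
      let f := properLift hp hs (sumElimMap g.1 (τ.comp g.1)) (factorsThrough g)
      have f_inl (z) : f (i z) = g.1 z := properLift_apply hp hs _ _ (.inl z)
      have f_inr (z) : f (ρ (i z)) = τ (g.1 z) := properLift_apply hp hs _ _ (.inr z)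
      ⟨f, (f_inl h).trans g.2.1, by
        refine hs.forall.2 (Sum.forall.2 ⟨fun z => ?_, fun z => ?_⟩)
        · exact (f_inr z).trans (congrArg τ (f_inl z)).symm
        · refine (congrArg f (hρ (i z))).trans ?_
          exact (f_inl z).trans ((congrArg τ (f_inr z)).trans (hτ (g.1 z))).symm⟩
    left_inv f := Subtype.ext <| ContinuousMap.ext <| hs.forall.2 <| Sum.forall.2
      ⟨fun z => properLift_apply hp hs _ _ (.inl z),
        fun z => (properLift_apply hp hs _ _ (.inr z)).trans (f.2.2 (i z)).symm⟩
    right_inv g := Subtype.ext <| ContinuousMap.ext fun z =>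
      properLift_apply hp hs _ (factorsThrough g) (.inl z)
    continuous_toFun := by fun_prop
    continuous_invFun := by
      refine (continuous_properLift hp hs ?_ factorsThrough).subtype_mk _
      exact continuous_sumElimMap.comp <| continuous_subtype_val.prodMk <|
        (ContinuousMap.continuous_postcomp τ).comp continuous_subtype_val }

end FundamentalDomain

section Splitting

instance isTopologicalGroup_continuousMap {A G : Type*} [TopologicalSpace A]
    [LocallyCompactSpace A] [TopologicalSpace G] [Group G] [IsTopologicalGroup G] :
    IsTopologicalGroup C(A, G) where
  continuous_inv := ContinuousMap.continuous_postcomp ⟨_, continuous_inv⟩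

variable {Γ Δ Φ : Type*} [Group Γ] [TopologicalSpace Γ] [IsTopologicalGroup Γ]
  [Group Δ] [TopologicalSpace Δ] [TopologicalSpace Φ]

/-- Over the image of an embedding `r : Φ → Δ` that lifts to `Γ`, a homomorphism `Γ → Δ` is a
trivial bundle whose fibre is its kernel. -/
def preimageRangeHomeomorphProdKer {R : Γ →* Δ} (hR : Continuous R) {r : Φ → Δ}
    (hr : IsEmbedding r) {E : Φ → Γ} (hE : Continuous E) (hRE : ∀ φ, R (E φ) = r φ) :
    R ⁻¹' range r ≃ₜ Φ × R.ker :=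
  let base (g : R ⁻¹' range r) : Φ := hr.toHomeomorph.symm ⟨R g, g.2⟩
  have r_base (g) : r (base g) = R g :=
    congrArg Subtype.val (hr.toHomeomorph.apply_symm_apply ⟨R g, g.2⟩)
  have continuous_base : Continuous base := by fun_prop
  { toFun g := (base g, ⟨g * (E (base g))⁻¹, by simp [MonoidHom.mem_ker, hRE, r_base]⟩)
    invFun q := ⟨q.2 * E q.1, q.1, by simp [hRE, MonoidHom.mem_ker.1 q.2.2]⟩
    left_inv g := by simp
    right_inv q := by
      have hR : R (q.2 * E q.1) = r q.1 := by rw [map_mul, q.2.2, one_mul, hRE]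
      have hbase : base ⟨q.2 * E q.1, q.1, hR.symm⟩ = q.1 := hr.injective ((r_base _).trans hR)
      ext : 1
      · exact hbase
      · exact Subtype.ext (by simp only [hbase, mul_inv_cancel_right])
    continuous_toFun := by fun_prop
    continuous_invFun := by fun_prop }

end Splitting

section OnePointMap

variable {X Y Z X' Y' : Type*} [TopologicalSpace X] [TopologicalSpace Y] [TopologicalSpace Z]
  [TopologicalSpace X'] [TopologicalSpace Y']

/-- The space `Map_*(X⁺, Y⁺)` of based maps between one-point compactifications. -/
abbrev BasedMaps (X Y : Type*) [TopologicalSpace X] [TopologicalSpace Y] : Type _ :=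
  {f : C(OnePoint X, OnePoint Y) // f ∞ = ∞}

/-- Homeomorphic spaces have homeomorphic spaces of based maps. -/
def basedMapsCongr (h : X ≃ₜ X') (k : Y ≃ₜ Y') : BasedMaps X Y ≃ₜ BasedMaps X' Y' :=
  (h.onePointCongr.arrowCongr k.onePointCongr).subtype fun f => by
    change f ∞ = ∞ ↔ k.onePointCongr (f ∞) = k.onePointCongr ∞
    rw [k.onePointCongr.injective.eq_iff]

/-- The map `X⁺ → Y⁺` induced by a proper map `X → Y`. -/
def onePointMap (f : X → Y) (hf : IsProperMap f) : C(OnePoint X, OnePoint Y) where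
  toFun := OnePoint.map f
  continuous_toFun := OnePoint.continuous_map hf.continuous <|
    Filter.hasBasis_coclosedCompact.tendsto_right_iff.2 fun _ hK =>
      Filter.hasBasis_coclosedCompact.mem_of_mem
        ⟨hK.1.preimage hf.continuous, hf.isCompact_preimage hK.2⟩

lemma isEmbedding_onePointMap [T2Space Y] [WeaklyLocallyCompactSpace Y] {f : X → Y}
    (hf : IsProperMap f) (hinj : Injective f) : IsEmbedding (onePointMap f hf) :=
  ((onePointMap f hf).continuous.isClosedEmbedding (Option.map_injective hinj)).isEmbedding

lemma range_postcomp_of_isEmbedding {r : C(Y, Z)} (hr : IsEmbedding r) :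
    range (fun φ : C(X, Y) => r.comp φ) = {g | ∀ x, g x ∈ range r} := by
  refine Subset.antisymm ?_ fun g hg => ?_
  · rintro _ ⟨φ, rfl⟩ x
    exact ⟨φ x, rfl⟩
  · refine ⟨⟨fun x => hr.toHomeomorph.symm ⟨g x, hg x⟩, by fun_prop⟩, ?_⟩
    ext x
    exact congrArg Subtype.val (hr.toHomeomorph.apply_symm_apply ⟨g x, hg x⟩)

end OnePointMap

section Slice

variable (X : Type*) {S : Type*} [TopologicalSpace X] [TopologicalSpace S] [T2Space X] [T2Space S]

/-- The inclusion `X⁺ → (X × S)⁺` of the slice `X × {s}`. -/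
def slice (s : S) : C(OnePoint X, OnePoint (X × S)) :=
  onePointMap (·, s) (isProperMap_of_comp_of_t2 (by fun_prop) continuous_fst isProperMap_id)

variable {X}

@[simp]
lemma slice_infty (s : S) : slice X s ∞ = ∞ :=
  rfl

@[simp]
lemma slice_coe (s : S) (x : X) : slice X s x = ↑(x, s) :=
  rfl

lemma isEmbedding_slice [LocallyCompactSpace X] [LocallyCompactSpace S] (s : S) :
    IsEmbedding (slice X s) :=
  isEmbedding_onePointMap _ fun _ _ h => congrArg Prod.fst h

lemma infty_mem_range_slice (s : S) : ∞ ∈ range (slice X s) :=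
  ⟨∞, rfl⟩

lemma coe_mem_range_slice_iff {s t : S} {x : X} :
    (((x, t) : X × S) : OnePoint (X × S)) ∈ range (slice X s) ↔ t = s := by
  refine ⟨?_, ?_⟩
  · rintro ⟨a, ha⟩
    induction a using OnePoint.rec <;> simp_all
  · rintro rfl
    exact ⟨x, rfl⟩

end Slice

section Smash

variable {X Y S T : Type*}

lemma notMem_range_prodMap_coe_iff {x : OnePoint X × OnePoint S} :
    x ∉ range (Prod.map (↑) (↑) : X × S → OnePoint X × OnePoint S) ↔ x.1 = ∞ ∨ x.2 = ∞ := by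
  rw [range_prodMap, mem_prod, not_and_or, OnePoint.notMem_range_coe_iff,
    OnePoint.notMem_range_coe_iff]

variable [TopologicalSpace X] [TopologicalSpace Y] [TopologicalSpace S] [TopologicalSpace T]

lemma isOpenEmbedding_prodMap_coe :
    IsOpenEmbedding (Prod.map (↑) (↑) : X × S → OnePoint X × OnePoint S) :=
  OnePoint.isOpenEmbedding_coe.prodMap OnePoint.isOpenEmbedding_coe

variable [T2Space X] [T2Space Y] [T2Space S] [T2Space T] [LocallyCompactSpace X]
  [LocallyCompactSpace Y] [LocallyCompactSpace S] [LocallyCompactSpace T]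

/-- The quotient map onto the smash product `X⁺ ∧ S⁺ = (X × S)⁺`. -/
def smash : C(OnePoint X × OnePoint S, OnePoint (X × S)) :=
  collapseMap isOpenEmbedding_prodMap_coe

lemma smash_coe (x : X) (s : S) : smash ((x : OnePoint X), (s : OnePoint S)) = ↑(x, s) :=
  collapse_apply isOpenEmbedding_prodMap_coe.injective (x, s)

lemma smash_eq_infty {x : OnePoint X × OnePoint S} (hx : x.1 = ∞ ∨ x.2 = ∞) : smash x = ∞ :=
  collapse_of_notMem_range (notMem_range_prodMap_coe_iff.2 hx)

lemma smash_coe_right (x : OnePoint X) (s : S) : smash (x, (s : OnePoint S)) = slice X s x := by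
  induction x using OnePoint.rec with
  | infty => exact smash_eq_infty (.inl rfl)
  | coe x => exact smash_coe x s

lemma isProperMap_smash : IsProperMap (smash : C(OnePoint X × OnePoint S, OnePoint (X × S))) :=
  isProperMap_collapseMap isOpenEmbedding_prodMap_coe

lemma surjective_smash : Surjective (smash : C(OnePoint X × OnePoint S, OnePoint (X × S))) :=
  collapse_surjective (x := (∞, ∞)) isOpenEmbedding_prodMap_coe.injective
    (notMem_range_prodMap_coe_iff.2 (.inl rfl))

lemma factorsThrough_smash (φ : BasedMaps X Y) (ψ : BasedMaps S T) :
    FactorsThrough (smash.comp (φ.1.prodMap ψ.1)) (smash (X := X) (S := S)) := by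
  have smash_prodMap_eq_infty {x : OnePoint X × OnePoint S} (hx : x.1 = ∞ ∨ x.2 = ∞) :
      smash (φ.1.prodMap ψ.1 x) = ∞ :=
    smash_eq_infty <| hx.imp (fun h => (congrArg φ.1 h).trans φ.2)
      fun h => (congrArg ψ.1 h).trans ψ.2
  have hinf : ((∞, ∞) : OnePoint X × OnePoint S) ∉
      range (Prod.map (↑) (↑) : X × S → OnePoint X × OnePoint S) :=
    notMem_range_prodMap_coe_iff.2 (.inl rfl)
  refine (factorsThrough_collapse_iff isOpenEmbedding_prodMap_coe.injective hinf).2 fun x hx => ?_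
  exact (smash_prodMap_eq_infty (notMem_range_prodMap_coe_iff.1 hx)).trans
    (smash_prodMap_eq_infty (.inl rfl)).symm

/-- The smash product `φ ∧ ψ : (X × S)⁺ → (Y × T)⁺` of based maps. -/
def smashMap (φ : BasedMaps X Y) (ψ : BasedMaps S T) : C(OnePoint (X × S), OnePoint (Y × T)) :=
  properLift isProperMap_smash surjective_smash (smash.comp (φ.1.prodMap ψ.1))
    (factorsThrough_smash φ ψ)

lemma smashMap_smash (φ : BasedMaps X Y) (ψ : BasedMaps S T) (x : OnePoint X) (s : OnePoint S) :
    smashMap φ ψ (smash (x, s)) = smash (φ.1 x, ψ.1 s) :=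
  properLift_apply isProperMap_smash surjective_smash _ _ (x, s)

lemma smashMap_comp_slice (φ : BasedMaps X Y) {ψ : BasedMaps S T} {s : S} {t : T}
    (hψ : ψ.1 s = t) : (smashMap φ ψ).comp (slice X s) = (slice Y t).comp φ.1 := by
  ext x
  simp only [ContinuousMap.comp_apply, ← smash_coe_right, smashMap_smash, hψ]

lemma continuous_smashMap_left (ψ : BasedMaps S T) :
    Continuous fun φ : BasedMaps X Y => smashMap φ ψ := by
  refine continuous_properLift isProperMap_smash surjective_smash ?_
    fun φ => factorsThrough_smash φ ψ
  refine ContinuousMap.continuous_of_continuous_uncurry _ ?_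
  change Continuous fun q : BasedMaps X Y × OnePoint X × OnePoint S =>
    smash (q.1.1 q.2.1, ψ.1 q.2.2)
  fun_prop

end Smash

section Reflection

lemma isProperMap_nnrealCoe : IsProperMap ((↑) : ℝ≥0 → ℝ) :=
  isClosed_Ici.isProperMap_subtypeVal

lemma range_toNNReal_exp : range (Real.toNNReal ∘ Real.exp) = Ioi 0 := by
  refine Subset.antisymm ?_ fun t ht => ⟨Real.log t, ?_⟩
  · rintro _ ⟨s, rfl⟩
    exact Real.toNNReal_pos.2 (Real.exp_pos s)
  · rw [comp_apply, Real.exp_log (NNReal.coe_pos.2 ht), Real.toNNReal_coe]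

lemma isOpenEmbedding_toNNReal_exp : IsOpenEmbedding (Real.toNNReal ∘ Real.exp) := by
  have coe_comp : NNReal.toReal ∘ Real.toNNReal ∘ Real.exp = Real.exp :=
    funext fun s => Real.coe_toNNReal _ (Real.exp_pos s).le
  have hemb : IsEmbedding (NNReal.toReal ∘ Real.toNNReal ∘ Real.exp) :=
    coe_comp.symm ▸ Real.isOpenEmbedding_exp.isEmbedding
  refine ⟨.of_comp (by fun_prop) NNReal.continuous_coe hemb, ?_⟩
  rw [range_toNNReal_exp]
  exact isOpen_Ioi

variable (X : Type*)

/-- The inclusion of the interior `X × (0, ∞)` of `(X × [0, ∞))⁺`, parametrised by `X × ℝ` through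
the exponential. -/
def interiorInclusion : X × ℝ → OnePoint (X × ℝ≥0) :=
  (↑) ∘ Prod.map id (Real.toNNReal ∘ Real.exp)

lemma coe_mem_range_interiorInclusion_iff {x : X} {t : ℝ≥0} :
    (((x, t) : X × ℝ≥0) : OnePoint (X × ℝ≥0)) ∈ range (interiorInclusion X) ↔ t ≠ 0 := by
  rw [interiorInclusion, range_comp, OnePoint.coe_injective.mem_set_image, range_prodMap,
    range_toNNReal_exp, range_id, mem_prod, mem_Ioi, pos_iff_ne_zero]
  exact and_iff_right trivial

variable [TopologicalSpace X]

/-- The reflection of `(X × ℝ)⁺` in `X⁺`. -/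
def reflection : C(OnePoint (X × ℝ), OnePoint (X × ℝ)) :=
  onePointMap (Prod.map id Neg.neg) (isProperMap_id.prodMap (Homeomorph.neg ℝ).isProperMap)

/-- The inclusion `(X × [0, ∞))⁺ → (X × ℝ)⁺`. -/
def halfSpaceInclusion : C(OnePoint (X × ℝ≥0), OnePoint (X × ℝ)) :=
  onePointMap (Prod.map id (↑)) (isProperMap_id.prodMap isProperMap_nnrealCoe)

lemma isOpenEmbedding_interiorInclusion : IsOpenEmbedding (interiorInclusion X) :=
  OnePoint.isOpenEmbedding_coe.comp (IsOpenEmbedding.id.prodMap isOpenEmbedding_toNNReal_exp)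

variable {X}

lemma involutive_reflection : Involutive (reflection X) := by
  rintro (_ | ⟨x, t⟩)
  · rfl
  · exact congrArg (fun s : ℝ => (((x, s) : X × ℝ) : OnePoint (X × ℝ))) (neg_neg t)

lemma injective_halfSpaceInclusion : Injective (halfSpaceInclusion X) :=
  Option.map_injective (injective_id.prodMap NNReal.coe_injective)

lemma exists_halfSpaceInclusion_eq_or_reflection_eq (a : OnePoint (X × ℝ)) :
    (∃ z, halfSpaceInclusion X z = a) ∨ ∃ z, reflection X (halfSpaceInclusion X z) = a := by
  obtain _ | ⟨x, t⟩ := a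
  · exact .inl ⟨∞, rfl⟩
  obtain ht | ht := le_total 0 t
  · lift t to ℝ≥0 using ht
    exact .inl ⟨((x, t) : X × ℝ≥0), rfl⟩
  · obtain ⟨s, rfl⟩ : ∃ s : ℝ≥0, -(s : ℝ) = t := ⟨⟨-t, neg_nonneg.2 ht⟩, neg_neg t⟩
    exact .inr ⟨((x, s) : X × ℝ≥0), rfl⟩

lemma eq_of_reflection_halfSpaceInclusion_eq {z w : OnePoint (X × ℝ≥0)}
    (h : reflection X (halfSpaceInclusion X z) = halfSpaceInclusion X w) : z = w := by
  obtain _ | ⟨x, s⟩ := z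
  · exact injective_halfSpaceInclusion h
  obtain _ | ⟨y, t⟩ := w
  · exact (OnePoint.coe_ne_infty _ h).elim
  obtain ⟨rfl, hst⟩ := Prod.mk.inj (OnePoint.coe_eq_coe.1 h)
  have hst : -(s : ℝ) = t := hst
  obtain rfl : s = t := NNReal.eq (by linarith [s.coe_nonneg, t.coe_nonneg])
  rfl

variable [T2Space X]

lemma reflection_eq_self_iff {a : OnePoint (X × ℝ)} :
    reflection X a = a ↔ a ∈ range (slice X 0) := by
  obtain _ | ⟨x, t⟩ := a
  · exact iff_of_true rfl (infty_mem_range_slice 0)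
  · refine Iff.trans ?_ coe_mem_range_slice_iff.symm
    exact OnePoint.coe_eq_coe.trans (by simp [CharZero.neg_eq_self_iff])

lemma halfSpaceInclusion_mem_range_slice_iff {z : OnePoint (X × ℝ≥0)} :
    halfSpaceInclusion X z ∈ range (slice X 0) ↔ z ∈ range (slice X 0) := by
  obtain _ | ⟨x, t⟩ := z
  · exact iff_of_true (infty_mem_range_slice 0) (infty_mem_range_slice 0)
  · exact coe_mem_range_slice_iff.trans (NNReal.coe_eq_zero.trans coe_mem_range_slice_iff.symm)

lemma notMem_range_interiorInclusion_iff {z : OnePoint (X × ℝ≥0)} :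
    z ∉ range (interiorInclusion X) ↔ z ∈ range (slice X 0) := by
  obtain _ | ⟨x, t⟩ := z
  · exact iff_of_true (fun ⟨p, hp⟩ => OnePoint.coe_ne_infty _ hp) (infty_mem_range_slice 0)
  exact (not_congr (coe_mem_range_interiorInclusion_iff X)).trans <|
    not_not.trans coe_mem_range_slice_iff.symm

end Reflection

section EquivariantMaps

variable {V W V' W' : Type*}

lemma semiconj_onePointMap {h : V → V'} {σ : V → V} {σ' : V' → V'} (hσ : Semiconj h σ σ') :
    Semiconj (OnePoint.map h) (OnePoint.map σ) (OnePoint.map σ') := by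
  intro x
  simp only [← comp_apply (f := OnePoint.map _), ← OnePoint.map_comp, hσ.comp_eq]

variable [TopologicalSpace V] [TopologicalSpace W] [TopologicalSpace V'] [TopologicalSpace W']

/-- The space of based maps `V⁺ → W⁺` that intertwine the self-maps induced by `σ` and `τ`. -/
abbrev EquivariantBasedMaps (σ : V → V) (τ : W → W) : Type _ :=
  {f : C(OnePoint V, OnePoint W) //
    f ∞ = ∞ ∧ ∀ x, f (OnePoint.map σ x) = OnePoint.map τ (f x)}

/-- Conjugate self-maps have homeomorphic spaces of equivariant based maps. -/
def equivariantBasedMapsCongr {σ : V → V} {τ : W → W} {σ' : V' → V'} {τ' : W' → W'} (h : V ≃ₜ V')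
    (k : W ≃ₜ W') (hσ : Semiconj h σ σ') (hτ : Semiconj k τ τ') :
    EquivariantBasedMaps σ τ ≃ₜ EquivariantBasedMaps σ' τ' :=
  (h.onePointCongr.arrowCongr k.onePointCongr).subtype fun f => by
    refine and_congr (k.onePointCongr.injective.eq_iff (b := ∞)).symm ?_
    refine Iff.trans (forall_congr' fun x => ?_) h.onePointCongr.surjective.forall.symm
    have conj_apply (x) : h.onePointCongr.arrowCongr k.onePointCongr f (h.onePointCongr x) =
        k.onePointCongr (f x) :=
      congrArg (k.onePointCongr ∘ f) (h.onePointCongr.symm_apply_apply x)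
    have hσ : OnePoint.map σ' (h.onePointCongr x) = h.onePointCongr (OnePoint.map σ x) :=
      (semiconj_onePointMap hσ x).symm
    have hτ : OnePoint.map τ' (k.onePointCongr (f x)) = k.onePointCongr (OnePoint.map τ (f x)) :=
      (semiconj_onePointMap hτ (f x)).symm
    rw [hσ, conj_apply, conj_apply, hτ, k.onePointCongr.injective.eq_iff]

end EquivariantMaps

section ReflectionEquivariantMaps

variable {X Y : Type*} [TopologicalSpace X] [TopologicalSpace Y] [T2Space X]

/-- Restriction of maps `(X × [0, ∞))⁺ → G` into a topological group to the boundary `X⁺`. -/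
def boundaryRestriction (X G : Type*) [TopologicalSpace X] [T2Space X] [TopologicalSpace G]
    [Group G] [IsTopologicalGroup G] : C(OnePoint (X × ℝ≥0), G) →* C(OnePoint X, G) :=
  ContinuousMap.compMonoidHom' (slice X 0)

lemma coe_ker_boundaryRestriction {G : Type*} [TopologicalSpace G] [Group G]
    [IsTopologicalGroup G] :
    ((boundaryRestriction X G).ker : Set C(OnePoint (X × ℝ≥0), G)) =
      {γ | ∀ z ∉ range (interiorInclusion X), γ z = 1} := by
  ext γ
  simp only [notMem_range_interiorInclusion_iff, mem_ofPred_eq, forall_mem_range]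
  exact ContinuousMap.ext_iff

/-- The based map `[0, ∞)⁺ → ℝ⁺` given by the inclusion. -/
def nnrealBasedMap : BasedMaps ℝ≥0 ℝ :=
  ⟨onePointMap (↑) isProperMap_nnrealCoe, rfl⟩

variable [T2Space Y] [LocallyCompactSpace Y]

lemma setOf_preserves_reflection_fixedPoints :
    {g : C(OnePoint (X × ℝ≥0), OnePoint (Y × ℝ)) | g ∞ = ∞ ∧
      ∀ z, reflection X (halfSpaceInclusion X z) = halfSpaceInclusion X z →
        reflection Y (g z) = g z} =
      (fun g => g.comp (slice X 0)) ⁻¹'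
        range fun φ : BasedMaps X Y => (slice Y (0 : ℝ)).comp φ.1 := by
  ext g
  simp only [reflection_eq_self_iff, halfSpaceInclusion_mem_range_slice_iff, mem_ofPred_eq]
  refine ⟨fun ⟨hinf, hg⟩ => ?_, fun ⟨φ, hφ⟩ => ?_⟩
  · obtain ⟨φ, hφ⟩ : g.comp (slice X 0) ∈ range fun φ : C(_, _) => (slice Y (0 : ℝ)).comp φ := by
      rw [range_postcomp_of_isEmbedding (isEmbedding_slice 0)]
      exact fun x => hg _ ⟨x, rfl⟩
    have hφinf : slice Y (0 : ℝ) (φ ∞) = ∞ := (DFunLike.congr_fun hφ ∞).trans hinf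
    exact ⟨⟨φ, (isEmbedding_slice 0).injective hφinf⟩, hφ⟩
  · have hφ (x) : slice Y (0 : ℝ) (φ.1 x) = g (slice X 0 x) := DFunLike.congr_fun hφ x
    refine ⟨(hφ ∞).symm.trans (congrArg _ φ.2), ?_⟩
    rintro _ ⟨x, rfl⟩
    exact ⟨φ.1 x, hφ x⟩

variable [LocallyCompactSpace X] [Group (OnePoint (Y × ℝ))] [IsTopologicalGroup (OnePoint (Y × ℝ))]

/-- If `(Y × ℝ)⁺` is a topological group with unit `∞`, then the maps `(X × ℝ)⁺ → (Y × ℝ)⁺`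
equivariant for the reflections are pairs of a map of fixed points and a map out of
the open half-space `X × (0, ∞) ≅ X × ℝ`. -/
def reflectionEquivariantMapsHomeomorph (h1 : (1 : OnePoint (Y × ℝ)) = ∞) :
    EquivariantBasedMaps (Prod.map id Neg.neg : X × ℝ → X × ℝ)
        (Prod.map id Neg.neg : Y × ℝ → Y × ℝ) ≃ₜ
      BasedMaps X Y × BasedMaps (X × ℝ) (Y × ℝ) :=
  (fundamentalDomainHomeomorph (involutive_reflection (X := X)) (involutive_reflection (X := Y))
    injective_halfSpaceInclusion exists_halfSpaceInclusion_eq_or_reflection_eq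
    (fun _ _ => eq_of_reflection_halfSpaceInclusion_eq) ∞ ∞).trans <|
  (Homeomorph.setCongr setOf_preserves_reflection_fixedPoints).trans <|
  (preimageRangeHomeomorphProdKer (R := boundaryRestriction X (OnePoint (Y × ℝ)))
    (ContinuousMap.continuous_precomp _)
    ((ContinuousMap.isEmbedding_postcomp _ (isEmbedding_slice (X := Y) (0 : ℝ))).comp .subtypeVal)
    (continuous_smashMap_left nnrealBasedMap)
    (fun φ => smashMap_comp_slice φ rfl)).trans <|
  (Homeomorph.refl _).prodCongr <|
  (Homeomorph.setCongr coe_ker_boundaryRestriction).trans <|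
  (basedMapsCollapseHomeomorph (isOpenEmbedding_interiorInclusion X)
    (notMem_range_interiorInclusion_iff.2 (infty_mem_range_slice 0)) 1).symm.trans <|
  .setCongr (by rw [h1])

end ReflectionEquivariantMaps

section RegularRepresentation

lemma exists_isTopologicalGroup_onePoint {V : Type*} [NormedAddCommGroup V] [NormedSpace ℝ V]
    [FiniteDimensional ℝ V] (hV : Module.finrank ℝ V = 3) :
    ∃ _ : Group (OnePoint V), IsTopologicalGroup (OnePoint V) ∧ (1 : OnePoint V) = ∞ := by
  obtain ⟨v, hv⟩ := exists_norm_eq (Quaternion ℝ) zero_le_one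
  have hv₀ : v ≠ 0 := fun h => by simp [h] at hv
  have : Fact (Module.finrank ℝ (Quaternion ℝ) = 3 + 1) := ⟨Quaternion.finrank_eq_four⟩
  have finrank_eq : Module.finrank ℝ V = Module.finrank ℝ (Submodule.span ℝ {v})ᗮ :=
    hV.trans (Submodule.finrank_orthogonal_span_singleton hv₀).symm
  let h : OnePoint V ≃ₜ Metric.sphere (0 : Quaternion ℝ) 1 :=
    (ContinuousLinearEquiv.ofFinrankEq finrank_eq).toHomeomorph.onePointCongr.trans
      (onePointHyperplaneHomeoUnitSphere hv)
  let e : OnePoint V ≃ₜ Metric.sphere (0 : Quaternion ℝ) 1 :=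
    h.trans (Homeomorph.mulLeft (h ∞)⁻¹)
  let _ : Group (OnePoint V) := e.toEquiv.group
  refine ⟨inferInstance, e.isInducing.topologicalGroup e.toEquiv.mulEquiv, ?_⟩
  exact e.toEquiv.symm_apply_eq.2 (inv_mul_cancel (h ∞)).symm

/-- The coordinates `(v₀ + v₁, v₀ - v₁)` on the regular representation `ℝ²`, which split it into
the trivial and the sign representation. -/
def sumDiffHomeomorph : EuclideanSpace ℝ (Fin 2) ≃ₜ ℝ × ℝ where
  toFun v := (v 0 + v 1, v 0 - v 1)
  invFun p := !₂[(p.1 + p.2) / 2, (p.1 - p.2) / 2]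
  left_inv v := by
    ext i
    fin_cases i <;> simp
  right_inv p := by
    ext <;> simp only [Fin.isValue, Matrix.cons_val_zero, Matrix.cons_val_one,
      Matrix.cons_val_fin_one] <;> ring
  continuous_toFun := by fun_prop
  continuous_invFun := by fun_prop

lemma semiconj_sumDiffHomeomorph :
    Semiconj sumDiffHomeomorph (swapAct 1) (Prod.map id Neg.neg) := fun v => by
  simp [sumDiffHomeomorph, swapAct, add_comm]

/-- The splitting of `ρ + 1` into the trivial representation `ℝ²` and the sign representation. -/
def sumDiffProdHomeomorph : EuclideanSpace ℝ (Fin 2) × ℝ ≃ₜ (ℝ × ℝ) × ℝ :=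
  (sumDiffHomeomorph.prodCongr (.refl ℝ)).trans <|
    (Homeomorph.prodAssoc ℝ ℝ ℝ).trans <|
    ((Homeomorph.refl ℝ).prodCongr (Homeomorph.prodComm ℝ ℝ)).trans
      (Homeomorph.prodAssoc ℝ ℝ ℝ).symm

lemma semiconj_sumDiffProdHomeomorph :
    Semiconj sumDiffProdHomeomorph (Prod.map (swapAct 1) id) (Prod.map id Neg.neg) := fun p =>
  congrArg (fun q : ℝ × ℝ => ((q.1, p.2), q.2)) (semiconj_sumDiffHomeomorph p.1)

lemma swapAct_zero : swapAct 0 = id :=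
  rfl

lemma forall_swapAct_equivariant_iff
    {f : OnePoint (EuclideanSpace ℝ (Fin 2)) → OnePoint (EuclideanSpace ℝ (Fin 2) × ℝ)} :
    (∀ (k : ZMod 2) (x : OnePoint (EuclideanSpace ℝ (Fin 2))),
      f (OnePoint.map (swapAct k) x) = OnePoint.map (fun p => (swapAct k p.1, p.2)) (f x)) ↔
      ∀ x, f (OnePoint.map (swapAct 1) x) = OnePoint.map (Prod.map (swapAct 1) id) (f x) := by
  refine ⟨fun h => h 1, fun h => Fin.forall_fin_two.2 ⟨fun x => ?_, h⟩⟩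
  calc
    f (OnePoint.map (swapAct 0) x) = f x := by rw [swapAct_zero, OnePoint.map_id, id]
    _ = OnePoint.map (fun p => (swapAct 0 p.1, p.2)) (f x) := by
      simp only [swapAct_zero, id, Prod.mk.eta]
      exact (congrFun OnePoint.map_id (f x)).symm

theorem equivariant_maps_regular_rep_C2_htpyEquiv_general :
    Nonempty
      ({f : C(OnePoint (EuclideanSpace ℝ (Fin 2)),
             OnePoint (EuclideanSpace ℝ (Fin 2) × ℝ)) //
        f OnePoint.infty = OnePoint.infty ∧
        ∀ (k : ZMod 2) (x : OnePoint (EuclideanSpace ℝ (Fin 2))),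
          f (OnePoint.map (swapAct k) x) =
            OnePoint.map (fun p => (swapAct k p.1, p.2)) (f x)} ≃ₜ
      BasedSphereMaps 1 2 × BasedSphereMaps 2 3) := by
  obtain ⟨_, _, one_eq_infty⟩ := exists_isTopologicalGroup_onePoint (V := (ℝ × ℝ) × ℝ) (by simp)
  let e₁ : ℝ ≃ₜ EuclideanSpace ℝ (Fin 1) :=
    (ContinuousLinearEquiv.ofFinrankEq (𝕜 := ℝ) (by simp)).toHomeomorph
  let e₂ : ℝ × ℝ ≃ₜ EuclideanSpace ℝ (Fin 2) :=
    (ContinuousLinearEquiv.ofFinrankEq (𝕜 := ℝ) (by simp)).toHomeomorph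
  let e₃ : (ℝ × ℝ) × ℝ ≃ₜ EuclideanSpace ℝ (Fin 3) :=
    (ContinuousLinearEquiv.ofFinrankEq (𝕜 := ℝ) (by simp)).toHomeomorph
  exact ⟨Homeomorph.trans (Y := EquivariantBasedMaps (swapAct 1) (Prod.map (swapAct 1) id))
      ((Homeomorph.refl _).subtype fun f => and_congr_right' forall_swapAct_equivariant_iff) <|
    (equivariantBasedMapsCongr sumDiffHomeomorph sumDiffProdHomeomorph semiconj_sumDiffHomeomorph
      semiconj_sumDiffProdHomeomorph).trans <|
    (reflectionEquivariantMapsHomeomorph one_eq_infty).trans <|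
    (basedMapsCongr e₁ e₂).prodCongr (basedMapsCongr e₂ e₃)⟩

end RegularRepresentation

theorem equivariant_maps_regular_rep_C2_htpyEquiv :
    Nonempty (ContinuousMap.HomotopyEquiv
      {f : C(OnePoint (EuclideanSpace ℝ (Fin 2)),
             OnePoint (EuclideanSpace ℝ (Fin 2) × ℝ)) //
        f OnePoint.infty = OnePoint.infty ∧
        ∀ (k : ZMod 2) (x : OnePoint (EuclideanSpace ℝ (Fin 2))),
          f (OnePoint.map (swapAct k) x) =
            OnePoint.map (fun p => (swapAct k p.1, p.2)) (f x)}
      (BasedSphereMaps 1 2 × BasedSphereMaps 2 3)) :=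
  equivariant_maps_regular_rep_C2_htpyEquiv_general.map Homeomorph.toHomotopyEquiv

end
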